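/- arXiv:2403.18956 — 3 statements merged into one kernel-verified Lean document; each statement's English description precedes it below -/
import Mathlib

section
/- (Proposition 1, pointwise form.) Let ω_1,…,ω_n ∈ ℝ^d and V_i ∈ ℝ^{d×r_i}, and define h(x0) := inf over λ_i ∈ ℝ^{r_i} of ‖Σ_{i=1}^n x0[i](ω_i + V_i λ_i)‖². Let N ∈ ℝ^{d×n} be the matrix whose i-th column is ω_i, let M := [V_1 … V_n] ∈ ℝ^{d×(Σ_i r_i)}, and let P : ℝ^d → ℝ^d be the orthogonal projection onto the column space of M. Then for every x0 ∈ ℝⁿ with all coordinates nonzero, h(x0) = ‖(I − P) N x0‖² and the infimum is attained; consequently the sets { x0 : h(x0) ≤ 1 } and { x0 : ‖(I − P) N x0‖² ≤ 1 } coincide outside a Lebesgue-null subset of ℝⁿ and have equal Lebesgue volume. -/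
open Matrix Finset MeasureTheory

/-!
Substituting `μ (i, k) = x i * lam i k`, the vector `∑ i, x i • (ω i + V i *ᵥ lam i)` becomes
`N *ᵥ x + M *ᵥ μ`, and when no `x i` vanishes `μ` ranges over all vectors. So the infimum is the
squared distance from `N *ᵥ x` to the column space of `M`, which Pythagoras identifies with
`‖(1 - P) *ᵥ (N *ᵥ x)‖²`. The excluded `x` lie on finitely many coordinate hyperplanes, a null set.
-/

section OrthogonalProjection

variable {R m ι : Type*} [Fintype m] [DecidableEq m] [Fintype ι]

theorem mulVec_dotProduct_one_sub_mulVec_eq_zero [CommRing R] {P : Matrix m m R}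
    (hidem : IsIdempotentElem P) (hsymm : P.IsSymm) (v w : m → R) :
    P *ᵥ v ⬝ᵥ (1 - P) *ᵥ w = 0 := by
  rw [dotProduct_mulVec, vecMul_mulVec, hsymm.eq, hidem.mul_one_sub_self, vecMul_zero,
    zero_dotProduct]

theorem sum_sq_mulVec_add_sum_sq_one_sub_mulVec [CommRing R] {P : Matrix m m R}
    (hidem : IsIdempotentElem P) (hsymm : P.IsSymm) (v : m → R) :
    ∑ j, (P *ᵥ v) j ^ 2 + ∑ j, ((1 - P) *ᵥ v) j ^ 2 = ∑ j, v j ^ 2 := by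
  have hsplit (j : m) : (P *ᵥ v) j + ((1 - P) *ᵥ v) j = v j := by
    rw [← Pi.add_apply, ← add_mulVec, add_sub_cancel, one_mulVec]
  have horth : ∑ j, (P *ᵥ v) j * ((1 - P) *ᵥ v) j = 0 :=
    mulVec_dotProduct_one_sub_mulVec_eq_zero hidem hsymm v v
  calc ∑ j, (P *ᵥ v) j ^ 2 + ∑ j, ((1 - P) *ᵥ v) j ^ 2
      = ∑ j, (P *ᵥ v) j ^ 2 + 2 * ∑ j, (P *ᵥ v) j * ((1 - P) *ᵥ v) j
          + ∑ j, ((1 - P) *ᵥ v) j ^ 2 := by rw [horth, mul_zero, add_zero]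
    _ = ∑ j, ((P *ᵥ v) j + ((1 - P) *ᵥ v) j) ^ 2 := by
      simp only [add_sq, sum_add_distrib, mul_sum, mul_assoc]
    _ = ∑ j, v j ^ 2 := by simp only [hsplit]

theorem one_sub_mulVec_mulVec_eq_zero [CommRing R] {P : Matrix m m R} {M : Matrix m ι R}
    (hidem : IsIdempotentElem P)
    (hrange : LinearMap.range M.mulVecLin ≤ LinearMap.range P.mulVecLin) (μ : ι → R) :
    (1 - P) *ᵥ (M *ᵥ μ) = 0 := by
  obtain ⟨w, hw : P *ᵥ w = M *ᵥ μ⟩ := hrange ⟨μ, rfl⟩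
  rw [← hw, mulVec_mulVec, hidem.one_sub_mul_self, zero_mulVec]

theorem isLeast_range_sum_sq_add_mulVec [CommRing R] [LinearOrder R] [IsOrderedRing R]
    {P : Matrix m m R} {M : Matrix m ι R} (hidem : IsIdempotentElem P) (hsymm : P.IsSymm)
    (hrange : LinearMap.range P.mulVecLin = LinearMap.range M.mulVecLin) (v : m → R) :
    IsLeast (Set.range fun μ : ι → R => ∑ j, (v + M *ᵥ μ) j ^ 2)
      (∑ j, ((1 - P) *ᵥ v) j ^ 2) := by
  constructor
  · obtain ⟨μ, hμ : M *ᵥ μ = P *ᵥ v⟩ := hrange.le ⟨v, rfl⟩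
    refine ⟨-μ, ?_⟩
    simp only [mulVec_neg, hμ, sub_mulVec, one_mulVec, ← sub_eq_add_neg]
  · rintro _ ⟨μ, rfl⟩
    calc ∑ j, ((1 - P) *ᵥ v) j ^ 2
        = ∑ j, ((1 - P) *ᵥ (v + M *ᵥ μ)) j ^ 2 := by
          rw [mulVec_add, one_sub_mulVec_mulVec_eq_zero hidem hrange.ge, add_zero]
      _ ≤ ∑ j, (P *ᵥ (v + M *ᵥ μ)) j ^ 2 + ∑ j, ((1 - P) *ᵥ (v + M *ᵥ μ)) j ^ 2 :=
          le_add_of_nonneg_left (sum_nonneg fun j _ => sq_nonneg _)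
      _ = ∑ j, (v + M *ᵥ μ) j ^ 2 :=
          sum_sq_mulVec_add_sum_sq_one_sub_mulVec hidem hsymm _

end OrthogonalProjection

section ColumnBlocks

variable {R m ι : Type*} {κ : ι → Type*}

/-- The block row matrix `[V_1 … V_n]`; its columns are indexed by pairs `(i, k)` with `k` a
column index of the block `V i`. -/
def blockRow (V : ∀ i, Matrix m (κ i) R) : Matrix m (Σ i, κ i) R :=
  Matrix.of fun j p => V p.1 j p.2

theorem sum_mul_add_mulVec_eq_add_blockRow_mulVec [CommSemiring R] [Fintype ι] [∀ i, Fintype (κ i)]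
    (ω : ι → m → R) (V : ∀ i, Matrix m (κ i) R) (x : ι → R) (lam : ∀ i, κ i → R) (j : m) :
    ∑ i, x i * (ω i j + (V i *ᵥ lam i) j) =
      ((Matrix.of ω)ᵀ *ᵥ x + blockRow V *ᵥ fun p => x p.1 * lam p.1 p.2) j := by
  simp only [blockRow, Pi.add_apply, mulVec, dotProduct, transpose_apply, of_apply,
    Fintype.sum_sigma, mul_add, sum_add_distrib, mul_sum, mul_comm (ω _ _),
    mul_left_comm (x _)]

theorem surjective_mul_sigma [GroupWithZero R] {x : ι → R} (hx : ∀ i, x i ≠ 0) :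
    Function.Surjective fun (lam : ∀ i, κ i → R) (p : Σ i, κ i) => x p.1 * lam p.1 p.2 :=
  fun μ => ⟨fun i k => (x i)⁻¹ * μ ⟨i, k⟩, funext fun p => mul_inv_cancel_left₀ (hx p.1) _⟩

theorem isLeast_constrained_energy [Field R] [LinearOrder R] [IsStrictOrderedRing R]
    [Fintype m] [DecidableEq m] [Fintype ι] [∀ i, Fintype (κ i)]
    (ω : ι → m → R) (V : ∀ i, Matrix m (κ i) R) {P : Matrix m m R}
    (hidem : IsIdempotentElem P) (hsymm : P.IsSymm)
    (hrange : LinearMap.range P.mulVecLin = LinearMap.range (blockRow V).mulVecLin)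
    {x : ι → R} (hx : ∀ i, x i ≠ 0) :
    IsLeast {e | ∃ lam : ∀ i, κ i → R, e = ∑ j, (∑ i, x i * (ω i j + (V i *ᵥ lam i) j)) ^ 2}
      (∑ j, (((1 - P) * (Matrix.of ω)ᵀ) *ᵥ x) j ^ 2) := by
  have hset : {e | ∃ lam : ∀ i, κ i → R, e = ∑ j, (∑ i, x i * (ω i j + (V i *ᵥ lam i) j)) ^ 2} =
      Set.range fun μ => ∑ j, ((Matrix.of ω)ᵀ *ᵥ x + blockRow V *ᵥ μ) j ^ 2 := by
    rw [← (surjective_mul_sigma hx).range_comp]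
    simp only [sum_mul_add_mulVec_eq_add_blockRow_mulVec, Set.range, Function.comp_apply, eq_comm]
  rw [hset, ← mulVec_mulVec]
  exact isLeast_range_sum_sq_add_mulVec hidem hsymm hrange _

end ColumnBlocks

theorem ae_pi_forall_ne {ι : Type*} [Fintype ι] {α : ι → Type*} [∀ i, MeasurableSpace (α i)]
    (μ : ∀ i, Measure (α i)) [∀ i, SigmaFinite (μ i)] [∀ i, NullSingletonClass (μ i)]
    (c : ∀ i, α i) : ∀ᵐ x ∂Measure.pi μ, ∀ i, x i ≠ c i :=
  ae_all_iff.mpr fun i => Measure.ae_eval_ne μ i (c i)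

/-- Proposition 1, pointwise form: with `N = [ω_1 … ω_n]`,
`M = [V_1 … V_n]` and `P` the orthogonal projection onto the column space of `M`
(symmetric idempotent with range equal to the column space of `M`), for every `x0` with
all coordinates nonzero `h(x0) = ‖(I − P) N x0‖²` and the infimum is attained; hence the
sublevel sets `{h ≤ 1}` and `{‖(I−P)N x0‖² ≤ 1}` differ by a Lebesgue-null set and have
equal volume. -/
theorem constrained_energy_pointwise {n d : ℕ} (r : Fin n → ℕ)
    (ω : Fin n → Fin d → ℝ) (V : ∀ i : Fin n, Matrix (Fin d) (Fin (r i)) ℝ)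
    (N : Matrix (Fin d) (Fin n) ℝ) (hN : ∀ j i, N j i = ω i j)
    (M : Matrix (Fin d) ((i : Fin n) × Fin (r i)) ℝ)
    (hM : ∀ j p, M j p = V p.1 j p.2)
    (P : Matrix (Fin d) (Fin d) ℝ)
    (hPidem : P * P = P) (hPsym : Pᵀ = P)
    (hPrange : LinearMap.range P.mulVecLin = LinearMap.range M.mulVecLin)
    (h : (Fin n → ℝ) → ℝ)
    (hh : ∀ x0 : Fin n → ℝ, h x0 = sInf
      { e : ℝ | ∃ lam : ∀ i : Fin n, Fin (r i) → ℝ,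
          e = ∑ j : Fin d, (∑ i : Fin n, x0 i * (ω i j + (V i).mulVec (lam i) j)) ^ 2 }) :
    (∀ x0 : Fin n → ℝ, (∀ i, x0 i ≠ 0) →
        h x0 = ∑ j : Fin d, (((1 - P) * N).mulVec x0 j) ^ 2 ∧
        ∃ lam : ∀ i : Fin n, Fin (r i) → ℝ,
          ∑ j : Fin d, (∑ i : Fin n, x0 i * (ω i j + (V i).mulVec (lam i) j)) ^ 2 = h x0) ∧
    volume (symmDiff { x0 : Fin n → ℝ | h x0 ≤ 1 }
        { x0 : Fin n → ℝ | ∑ j : Fin d, (((1 - P) * N).mulVec x0 j) ^ 2 ≤ 1 }) = 0 ∧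
    volume { x0 : Fin n → ℝ | h x0 ≤ 1 }
      = volume { x0 : Fin n → ℝ | ∑ j : Fin d, (((1 - P) * N).mulVec x0 j) ^ 2 ≤ 1 } := by
  obtain rfl : N = (Matrix.of ω)ᵀ := Matrix.ext hN
  obtain rfl : M = blockRow V := Matrix.ext hM
  have hleast (x0 : Fin n → ℝ) (hx0 : ∀ i, x0 i ≠ 0) :=
    isLeast_constrained_energy ω V hPidem hPsym hPrange hx0
  have hval (x0 : Fin n → ℝ) (hx0 : ∀ i, x0 i ≠ 0) :
      h x0 = ∑ j, (((1 - P) * (Matrix.of ω)ᵀ) *ᵥ x0) j ^ 2 :=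
    (hh x0).trans (hleast x0 hx0).csInf_eq
  have hae : h =ᵐ[volume] fun x0 => ∑ j, (((1 - P) * (Matrix.of ω)ᵀ) *ᵥ x0) j ^ 2 :=
    (ae_pi_forall_ne (fun _ => volume) 0).mono hval
  have hsublevel := hae.preimage (Set.Iic 1)
  refine ⟨fun x0 hx0 => ⟨hval x0 hx0, ?_⟩, measure_symmDiff_eq_zero_iff.mpr hsublevel,
    measure_congr hsublevel⟩
  obtain ⟨lam, hlam⟩ := (hleast x0 hx0).1
  exact ⟨lam, hlam.symm.trans (hval x0 hx0).symm⟩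
end

section
/- (Proposition 1, volume/algorithm-output form.) In the setting above, set G := (I − P) N ∈ ℝ^{d×n}. If additionally A ∈ ℝ^{n×n} is invertible, T ≥ 1, and GᵀG is invertible, then the Lebesgue volume of the set { A^T x0 : x0 ∈ ℝⁿ, h(x0) ≤ 1 } equals |det(A^T)| / √(det(GᵀG)) times the volume of the Euclidean unit ball in ℝⁿ, which is the output of Algorithm 1 (in unit-ball-normalized volume). -/
open Matrix Finset MeasureTheory

/-!
For fixed `x` with no vanishing coordinate, the substitution `μ_i = x_i λ_i` is a bijection, so
`h x` is the squared distance from `N x` to the column space of `M`, namely `‖G x‖²`. When some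
`x_i = 0` the value `h x` may be larger, but such `x` lie in finitely many hyperplanes, so
`{h ≤ 1}` agrees almost everywhere with the ellipsoid `{x | xᵀ(GᵀG)x ≤ 1}`. Factoring
`GᵀG = RᵀR` with `R` square gives the volume of the ellipsoid, and a linear map scales volume by
the absolute value of its determinant.
-/

section Projection

variable {κ ρ R : Type*} [Fintype κ] [Fintype ρ] [DecidableEq κ] [CommRing R]

theorem one_sub_mulVec_dotProduct_mulVec_eq_zero {P : Matrix κ κ R} (hPidem : P * P = P)
    (hPsym : Pᵀ = P) (v w : κ → R) : ((1 - P) *ᵥ v) ⬝ᵥ (P *ᵥ w) = 0 := by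
  have hP : P * (1 - P) = 0 := by rw [mul_sub, mul_one, hPidem, sub_self]
  rw [dotProduct_mulVec, ← mulVec_transpose, hPsym, mulVec_mulVec, hP, zero_mulVec,
    zero_dotProduct]

variable [LinearOrder R] [IsStrictOrderedRing R]

theorem isLeast_range_dotProduct_self_add_mulVec {P : Matrix κ κ R} {M : Matrix κ ρ R}
    (hPidem : P * P = P) (hPsym : Pᵀ = P)
    (hPrange : LinearMap.range P.mulVecLin = LinearMap.range M.mulVecLin) (v : κ → R) :
    IsLeast (Set.range fun μ : ρ → R => (v + M *ᵥ μ) ⬝ᵥ (v + M *ᵥ μ))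
      (((1 - P) *ᵥ v) ⬝ᵥ ((1 - P) *ᵥ v)) := by
  constructor
  · obtain ⟨μ, hμ⟩ : P *ᵥ (-v) ∈ LinearMap.range M.mulVecLin := hPrange ▸ ⟨-v, rfl⟩
    have hres : v + M *ᵥ μ = (1 - P) *ᵥ v := by
      rw [← mulVecLin_apply, hμ, mulVec_neg, sub_mulVec, one_mulVec, sub_eq_add_neg]
    exact ⟨μ, by simp only [hres]⟩
  · rintro _ ⟨μ, rfl⟩
    obtain ⟨w, hw⟩ : M *ᵥ μ ∈ LinearMap.range P.mulVecLin := hPrange ▸ ⟨μ, rfl⟩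
    have hsplit : v + M *ᵥ μ = (1 - P) *ᵥ v + P *ᵥ (v + w) := by
      rw [← hw, mulVecLin_apply, sub_mulVec, one_mulVec, mulVec_add]
      abel
    have horth := one_sub_mulVec_dotProduct_mulVec_eq_zero hPidem hPsym v (v + w)
    have hnonneg : 0 ≤ (P *ᵥ (v + w)) ⬝ᵥ (P *ᵥ (v + w)) :=
      Finset.sum_nonneg fun _ _ => mul_self_nonneg _
    simp only [hsplit, add_dotProduct, dotProduct_add, dotProduct_comm (P *ᵥ (v + w)), horth,
      zero_add, add_zero, le_add_iff_nonneg_right, hnonneg]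

end Projection

section Energy

variable {ι κ : Type*} {α : ι → Type*} [Fintype ι] [∀ i, Fintype (α i)]

/-- The block matrix `[V₁ … Vₙ]` obtained by placing the matrices `V i` side by side, its columns
being indexed by pairs (block, column of that block). -/
def concatCols {R : Type*} (V : ∀ i, Matrix κ (α i) R) : Matrix κ ((i : ι) × α i) R :=
  Matrix.of fun j p => V p.1 j p.2

theorem sum_mul_add_mulVec_eq {R : Type*} [CommSemiring R] (ω : ι → κ → R)
    (V : ∀ i, Matrix κ (α i) R) (x : ι → R) (lam : ∀ i, α i → R) (j : κ) :
    ∑ i, x i * (ω i j + (V i *ᵥ lam i) j)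
      = ((Matrix.of ω)ᵀ *ᵥ x + concatCols V *ᵥ fun p => x p.1 * lam p.1 p.2) j := by
  simp only [Pi.add_apply, mulVec, dotProduct, transpose_apply, of_apply, concatCols,
    Fintype.sum_sigma, mul_add, Finset.sum_add_distrib, Finset.mul_sum, mul_comm,
    mul_left_comm]

variable [Fintype κ]

/-- The function `h` of the problem: the infimum over `λ` of the squared Euclidean norm of
`∑ i, x i • (ω i + V i λ i)`, written out in coordinates. -/
noncomputable def minEnergy (ω : ι → κ → ℝ) (V : ∀ i, Matrix κ (α i) ℝ) (x : ι → ℝ) : ℝ :=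
  sInf { e : ℝ | ∃ lam : ∀ i, α i → ℝ, e = ∑ j, (∑ i, x i * (ω i j + (V i *ᵥ lam i) j)) ^ 2 }

theorem minEnergy_eq_sInf_range {x : ι → ℝ} (hx : ∀ i, x i ≠ 0) (ω : ι → κ → ℝ)
    (V : ∀ i, Matrix κ (α i) ℝ) :
    minEnergy ω V x = sInf (Set.range fun μ =>
      ((Matrix.of ω)ᵀ *ᵥ x + concatCols V *ᵥ μ) ⬝ᵥ ((Matrix.of ω)ᵀ *ᵥ x + concatCols V *ᵥ μ)) := by
  have hsurj : Function.Surjective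
      fun (lam : ∀ i, α i → ℝ) (p : (i : ι) × α i) => x p.1 * lam p.1 p.2 := fun μ =>
    ⟨fun i k => μ ⟨i, k⟩ / x i, funext fun p => mul_div_cancel₀ _ (hx p.1)⟩
  rw [← hsurj.range_comp, minEnergy]
  congr 1
  ext e
  simp only [sum_mul_add_mulVec_eq, Set.mem_ofPred_eq, Set.mem_range, Function.comp_apply,
    dotProduct, sq, eq_comm]

theorem minEnergy_eq_dotProduct_mulVec [DecidableEq κ] {P : Matrix κ κ ℝ} (hPidem : P * P = P)
    (hPsym : Pᵀ = P) {V : ∀ i, Matrix κ (α i) ℝ}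
    (hPrange : LinearMap.range P.mulVecLin = LinearMap.range (concatCols V).mulVecLin)
    {x : ι → ℝ} (hx : ∀ i, x i ≠ 0) (ω : ι → κ → ℝ) {G : Matrix κ ι ℝ}
    (hG : G = (1 - P) * (Matrix.of ω)ᵀ) :
    minEnergy ω V x = x ⬝ᵥ ((Gᵀ * G) *ᵥ x) := by
  rw [minEnergy_eq_sInf_range hx,
    (isLeast_range_dotProduct_self_add_mulVec hPidem hPsym hPrange _).csInf_eq, mulVec_mulVec,
    ← hG, ← mulVec_mulVec, dotProduct_mulVec x, vecMul_transpose]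

end Energy

section Volume

variable {ι : Type*} [Fintype ι]

theorem ae_forall_apply_ne (c : ι → ℝ) : ∀ᵐ x : EuclideanSpace ℝ ι, ∀ i, x i ≠ c i :=
  ae_all_iff.2 fun i => (PiLp.volume_preserving_ofLp ι).quasiMeasurePreserving.ae
    (Measure.ae_eval_ne _ i (c i))

open scoped MatrixOrder Matrix.Norms.L2Operator in
theorem exists_eq_transpose_mul_self_of_posSemidef {S : Matrix ι ι ℝ} (hS : S.PosSemidef) :
    ∃ R : Matrix ι ι ℝ, S = Rᵀ * R := by
  classical
  obtain ⟨R, hR⟩ := CStarAlgebra.nonneg_iff_eq_star_mul_self.mp hS.nonneg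
  exact ⟨R, by rw [hR, star_eq_conjTranspose, conjTranspose_eq_transpose_of_trivial]⟩

variable [DecidableEq ι]

theorem posDef_transpose_mul_self_of_isUnit_det {κ : Type*} [Fintype κ] {G : Matrix κ ι ℝ}
    (hG : IsUnit (Gᵀ * G).det) : (Gᵀ * G).PosDef := by
  have hpsd : (Gᵀ * G).PosSemidef := by
    simpa only [conjTranspose_eq_transpose_of_trivial] using posSemidef_conjTranspose_mul_self G
  exact hpsd.posDef_iff_isUnit.2 ((isUnit_iff_isUnit_det _).2 hG)

theorem volume_setOf_dotProduct_mulVec_le {S : Matrix ι ι ℝ} (hS : S.PosDef) {r : ℝ}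
    (hr : 0 ≤ r) :
    volume { x : EuclideanSpace ℝ ι | x.ofLp ⬝ᵥ (S *ᵥ x.ofLp) ≤ r ^ 2 }
      = ENNReal.ofReal (√S.det)⁻¹ * volume (Metric.closedBall (0 : EuclideanSpace ℝ ι) r) := by
  obtain ⟨R, rfl⟩ := exists_eq_transpose_mul_self_of_posSemidef hS.posSemidef
  have hsqrt : √(Rᵀ * R).det = |R.det| := by
    rw [det_mul, det_transpose, Real.sqrt_mul_self_eq_abs]
  have hdet : (toLpLin 2 2 R).det ≠ 0 := by
    rw [LinearMap.det_toLpLin, ← abs_ne_zero, ← hsqrt]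
    exact (Real.sqrt_pos.2 hS.det_pos).ne'
  have hpreimage : { x : EuclideanSpace ℝ ι | x.ofLp ⬝ᵥ ((Rᵀ * R) *ᵥ x.ofLp) ≤ r ^ 2 }
      = toLpLin 2 2 R ⁻¹' Metric.closedBall 0 r := by
    ext x
    rw [Set.mem_preimage, mem_closedBall_zero_iff, ← sq_le_sq₀ (norm_nonneg _) hr,
      EuclideanSpace.real_norm_sq_eq, Set.mem_ofPred_eq, ← mulVec_mulVec, dotProduct_mulVec,
      vecMul_transpose]
    simp only [dotProduct, sq, ofLp_toLpLin, toLin'_apply]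
  rw [hpreimage, Measure.addHaar_preimage_linearMap _ hdet, LinearMap.det_toLpLin, hsqrt, abs_inv]

theorem volume_setOf_exists_eq_mulVec (B : Matrix ι ι ℝ) (p : (ι → ℝ) → Prop) :
    volume { y : EuclideanSpace ℝ ι | ∃ x, (fun i => y i) = B *ᵥ x ∧ p x }
      = ENNReal.ofReal |B.det| * volume { x : EuclideanSpace ℝ ι | p x.ofLp } := by
  have himage : { y : EuclideanSpace ℝ ι | ∃ x, (fun i => y i) = B *ᵥ x ∧ p x }
      = toLpLin 2 2 B '' { x | p x.ofLp } := by
    ext y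
    constructor
    · rintro ⟨x, hy, hx⟩
      exact ⟨WithLp.toLp 2 x, hx, WithLp.ofLp_injective 2 hy.symm⟩
    · rintro ⟨x, hx, rfl⟩
      exact ⟨x.ofLp, rfl, hx⟩
  rw [himage, Measure.addHaar_image_linearMap, LinearMap.det_toLpLin]

end Volume

theorem constrained_controllability_algorithm_output_general {ι κ : Type*} {α : ι → Type*}
    [Fintype ι] [DecidableEq ι] [Fintype κ] [DecidableEq κ] [∀ i, Fintype (α i)]
    (ω : ι → κ → ℝ) (V : ∀ i, Matrix κ (α i) ℝ)
    (N : Matrix κ ι ℝ) (hN : ∀ j i, N j i = ω i j)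
    (M : Matrix κ ((i : ι) × α i) ℝ) (hM : ∀ j p, M j p = V p.1 j p.2)
    (P : Matrix κ κ ℝ) (hPidem : P * P = P) (hPsym : Pᵀ = P)
    (hPrange : LinearMap.range P.mulVecLin = LinearMap.range M.mulVecLin)
    (G : Matrix κ ι ℝ) (hG : G = (1 - P) * N) (hGtG : IsUnit (Gᵀ * G).det)
    (B : Matrix ι ι ℝ) :
    volume { y : EuclideanSpace ℝ ι | ∃ x, (fun i => y i) = B *ᵥ x ∧ minEnergy ω V x ≤ 1 }
      = ENNReal.ofReal (|B.det| / √(Gᵀ * G).det) *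
        volume (Metric.closedBall (0 : EuclideanSpace ℝ ι) 1) := by
  obtain rfl : N = (Matrix.of ω)ᵀ := Matrix.ext hN
  obtain rfl : M = concatCols V := Matrix.ext hM
  have hsublevel : { x : EuclideanSpace ℝ ι | minEnergy ω V x.ofLp ≤ 1 }
      =ᵐ[volume] { x | x.ofLp ⬝ᵥ ((Gᵀ * G) *ᵥ x.ofLp) ≤ 1 ^ 2 } := by
    filter_upwards [ae_forall_apply_ne 0] with x hx
    exact congrArg₂ (· ≤ ·) (minEnergy_eq_dotProduct_mulVec hPidem hPsym hPrange hx ω hG)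
      (one_pow 2).symm
  rw [volume_setOf_exists_eq_mulVec, measure_congr hsublevel,
    volume_setOf_dotProduct_mulVec_le (posDef_transpose_mul_self_of_isUnit_det hGtG) zero_le_one,
    ← mul_assoc, ← ENNReal.ofReal_mul (abs_nonneg _), ← div_eq_mul_inv]

/-- Proposition 1, volume/algorithm-output form: with `G = (I − P) N`,
`A` invertible and `GᵀG` invertible, the Lebesgue volume of `{ A^T x0 : h(x0) ≤ 1 }`
equals `|det(A^T)| / √(det(GᵀG))` times the volume of the Euclidean unit ball, which is
the output of Algorithm 1. -/
theorem constrained_controllability_algorithm_output {n d : ℕ} (r : Fin n → ℕ)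
    (ω : Fin n → Fin d → ℝ) (V : ∀ i : Fin n, Matrix (Fin d) (Fin (r i)) ℝ)
    (N : Matrix (Fin d) (Fin n) ℝ) (hN : ∀ j i, N j i = ω i j)
    (M : Matrix (Fin d) ((i : Fin n) × Fin (r i)) ℝ)
    (hM : ∀ j p, M j p = V p.1 j p.2)
    (P : Matrix (Fin d) (Fin d) ℝ)
    (hPidem : P * P = P) (hPsym : Pᵀ = P)
    (hPrange : LinearMap.range P.mulVecLin = LinearMap.range M.mulVecLin)
    (h : (Fin n → ℝ) → ℝ)
    (hh : ∀ x0 : Fin n → ℝ, h x0 = sInf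
      { e : ℝ | ∃ lam : ∀ i : Fin n, Fin (r i) → ℝ,
          e = ∑ j : Fin d, (∑ i : Fin n, x0 i * (ω i j + (V i).mulVec (lam i) j)) ^ 2 })
    (G : Matrix (Fin d) (Fin n) ℝ) (hG : G = (1 - P) * N)
    (A : Matrix (Fin n) (Fin n) ℝ) (hA : IsUnit A.det)
    (T : ℕ) (hT : 1 ≤ T)
    (hGtG : IsUnit (Gᵀ * G).det) :
    volume { y : EuclideanSpace ℝ (Fin n) |
        ∃ x0 : Fin n → ℝ, (fun i => y i) = (A ^ T).mulVec x0 ∧ h x0 ≤ 1 }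
      = ENNReal.ofReal (|(A ^ T).det| / Real.sqrt (Gᵀ * G).det) *
        volume (Metric.closedBall (0 : EuclideanSpace ℝ (Fin n)) 1) := by
  obtain rfl : h = minEnergy ω V := funext hh
  exact constrained_controllability_algorithm_output_general ω V N hN M hM P hPidem hPsym hPrange
    G hG hGtG (A ^ T)
end

section
/- (Lemma 3: dimension of the constrained feasible trajectory set.) Assume each per-column feasible set C_i, i = 1,…,Nx, is nonempty. Then for every x0 ∈ ℝ^{Nx}, the constrained feasible set T(x0) = { Σ_{i=1}^{Nx} x0[i] s_i : s_i ∈ C_i } is an affine translate of the subspace Σ_{i : x0[i] ≠ 0} K_i of V (the subspace spanned by the union of the K_i with x0[i] ≠ 0); in particular, if x0[i] ≠ 0 for every i, then dim T(x0) = dim (K_1 + K_2 + … + K_{Nx}), independent of x0. -/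
open Matrix Finset

/-! Fix `c i ∈ C i`. Each `C i` is the fibre over `e i` of a linear relation whose fibre over `0`
is `K i`, so `C i = c i + K i`. Weighting by `x0 i` and summing gives
`T(x0) = ∑ i, x0 i • c i + ∑ i, x0 i • K i`, and over a field `x0 i • K i` is `K i` or `0`
according to whether `x0 i ≠ 0` or `x0 i = 0`. -/

open scoped Pointwise

section WeightedSumsOfCosets

variable {ι 𝕜 E : Type*} [AddCommGroup E]

theorem mem_iSup_ne_zero_iff_exists_sum_smul [Fintype ι] [DivisionRing 𝕜] [Module 𝕜 E]
    (p : ι → Submodule 𝕜 E) (x : ι → 𝕜) (v : E) :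
    v ∈ ⨆ i, ⨆ _ : x i ≠ 0, p i ↔ ∃ g : ι → E, (∀ i, g i ∈ p i) ∧ v = ∑ i, x i • g i := by
  classical
  constructor
  · intro hv
    have hv_filter : v ∈ ⨆ i ∈ univ.filter (x · ≠ 0), p i := by simpa using hv
    obtain ⟨w, rfl⟩ := (Submodule.mem_iSup_finset_iff_exists_sum p v).1 hv_filter
    refine ⟨fun i => (x i)⁻¹ • (w i : E), fun i => (p i).smul_mem _ (w i).2, ?_⟩
    rw [sum_filter]
    refine sum_congr rfl fun i _ => ?_
    by_cases hi : x i = 0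
    · simp [hi]
    · simp [hi, smul_inv_smul₀]
  · rintro ⟨g, hg, rfl⟩
    refine Submodule.sum_mem _ fun i _ => ?_
    by_cases hi : x i = 0
    · simp [hi]
    · exact Submodule.mem_iSup_of_mem i
        (Submodule.mem_iSup_of_mem hi ((p i).smul_mem _ (hg i)))

theorem setOf_sum_smul_mem_vadd_eq [Fintype ι] [DivisionRing 𝕜] [Module 𝕜 E]
    (p : ι → Submodule 𝕜 E) (c : ι → E) (x : ι → 𝕜) :
    {s | ∃ f : ι → E, (∀ i, f i ∈ c i +ᵥ (p i : Set E)) ∧ s = ∑ i, x i • f i} =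
      (∑ i, x i • c i) +ᵥ ((⨆ i, ⨆ _ : x i ≠ 0, p i : Submodule 𝕜 E) : Set E) := by
  ext s
  simp only [Set.mem_ofPred_eq, Set.mem_vadd_set_iff_neg_vadd_mem, SetLike.mem_coe,
    mem_iSup_ne_zero_iff_exists_sum_smul, vadd_eq_add]
  constructor
  · rintro ⟨f, hf, rfl⟩
    exact ⟨fun i => -c i + f i, hf, by simp [sum_add_distrib]⟩
  · rintro ⟨g, hg, hs⟩
    refine ⟨fun i => c i + g i, by simpa using hg, ?_⟩
    simp only [smul_add, sum_add_distrib, ← hs, add_neg_cancel_left]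

theorem direction_affineSpan_vadd_submodule [Ring 𝕜] [Module 𝕜 E] (a : E) (p : Submodule 𝕜 E) :
    (affineSpan 𝕜 (a +ᵥ (p : Set E))).direction = p := by
  rw [direction_affineSpan, vectorSpan_vadd]
  exact p.toAffineSubspace_direction

end WeightedSumsOfCosets

section Trajectories

/-- The space `V` of state-input trajectories `(x, u)` of horizon `T`, with states indexed by `n`
and inputs by `m`. -/
abbrev Trajectory (𝕜 n m : Type*) (T : ℕ) := (Fin T → n → 𝕜) × (Fin T → m → 𝕜)

variable {𝕜 n m : Type*} {T : ℕ}

/-- The family of scalar entries of a trajectory; the left summand indexes the entries of the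
states, the right one those of the inputs. -/
def trajectoryCoord [CommSemiring 𝕜] :
    Trajectory 𝕜 n m T →ₗ[𝕜] (Fin T × n) ⊕ (Fin T × m) → 𝕜 where
  toFun s := Sum.elim (fun p => s.1 p.1 p.2) (fun p => s.2 p.1 p.2)
  map_add' _ _ := by ext (_ | _) <;> rfl
  map_smul' _ _ := by ext (_ | _) <;> rfl

variable [Fintype n] [Fintype m]

section Linearity

variable [CommSemiring 𝕜]

/-- The feasible set `S(x0)`: trajectories of `x(t+1) = A x(t) + B u(t)` that start at `x0` and are
steered to the origin at time `T`. -/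
def feasibleSet (hT : 1 ≤ T) (A : Matrix n n 𝕜) (B : Matrix n m 𝕜) (x0 : n → 𝕜) :
    Set (Trajectory 𝕜 n m T) :=
  {s | s.1 ⟨0, hT⟩ = x0 ∧
    (∀ t : ℕ, (ht : t + 1 < T) →
      s.1 ⟨t + 1, ht⟩ =
        A *ᵥ s.1 ⟨t, Nat.lt_of_succ_lt ht⟩ + B *ᵥ s.2 ⟨t, Nat.lt_of_succ_lt ht⟩) ∧
    A *ᵥ s.1 ⟨T - 1, Nat.sub_one_lt_of_lt hT⟩ +
      B *ᵥ s.2 ⟨T - 1, Nat.sub_one_lt_of_lt hT⟩ = 0}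

/-- The feasible trajectories from `x0` that vanish on the coordinates in `R`. For the pattern
`R i` this is `C_i` when `x0 = e_i` and `K_i` when `x0 = 0`. -/
def supportedFeasibleSet (hT : 1 ≤ T) (A : Matrix n n 𝕜) (B : Matrix n m 𝕜)
    (R : Set ((Fin T × n) ⊕ (Fin T × m))) (x0 : n → 𝕜) : Set (Trajectory 𝕜 n m T) :=
  {s ∈ feasibleSet hT A B x0 | ∀ d ∈ R, trajectoryCoord s d = 0}

/-- The constrained feasible set `T(x0)`: combinations, weighted by the entries of `x0`, of
trajectories `s_i ∈ C_i`. -/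
def constrainedFeasibleSet [DecidableEq n] (hT : 1 ≤ T) (A : Matrix n n 𝕜) (B : Matrix n m 𝕜)
    (R : n → Set ((Fin T × n) ⊕ (Fin T × m))) (x0 : n → 𝕜) : Set (Trajectory 𝕜 n m T) :=
  {s | ∃ f : n → Trajectory 𝕜 n m T,
    (∀ i, f i ∈ supportedFeasibleSet hT A B (R i) (Pi.single i 1)) ∧ s = ∑ i, x0 i • f i}

variable {hT : 1 ≤ T} {A : Matrix n n 𝕜} {B : Matrix n m 𝕜}
  {R : Set ((Fin T × n) ⊕ (Fin T × m))} {x0 x0' : n → 𝕜} {s s' : Trajectory 𝕜 n m T}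

theorem zero_mem_feasibleSet : 0 ∈ feasibleSet hT A B 0 :=
  ⟨rfl, by simp, by simp⟩

theorem add_mem_feasibleSet (hs : s ∈ feasibleSet hT A B x0) (hs' : s' ∈ feasibleSet hT A B x0') :
    s + s' ∈ feasibleSet hT A B (x0 + x0') := by
  obtain ⟨start, step, terminal⟩ := hs
  obtain ⟨start', step', terminal'⟩ := hs'
  refine ⟨by simp [start, start'], fun t ht => ?_, ?_⟩
  · simp only [Prod.fst_add, Prod.snd_add, Pi.add_apply, mulVec_add, step t ht, step' t ht]
    exact add_add_add_comm _ _ _ _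
  · simp only [Prod.fst_add, Prod.snd_add, Pi.add_apply, mulVec_add]
    rw [add_add_add_comm, terminal, terminal', add_zero]

theorem smul_mem_feasibleSet (r : 𝕜) (hs : s ∈ feasibleSet hT A B x0) :
    r • s ∈ feasibleSet hT A B (r • x0) := by
  obtain ⟨start, step, terminal⟩ := hs
  refine ⟨by simp [start], fun t ht => ?_, ?_⟩
  · simp only [Prod.smul_fst, Prod.smul_snd, Pi.smul_apply, mulVec_smul, step t ht, smul_add]
  · simp only [Prod.smul_fst, Prod.smul_snd, Pi.smul_apply, mulVec_smul]
    rw [← smul_add, terminal, smul_zero]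

theorem add_mem_supportedFeasibleSet (hs : s ∈ supportedFeasibleSet hT A B R x0)
    (hs' : s' ∈ supportedFeasibleSet hT A B R x0') :
    s + s' ∈ supportedFeasibleSet hT A B R (x0 + x0') :=
  ⟨add_mem_feasibleSet hs.1 hs'.1, fun d hd => by simp [hs.2 d hd, hs'.2 d hd]⟩

theorem smul_mem_supportedFeasibleSet (r : 𝕜) (hs : s ∈ supportedFeasibleSet hT A B R x0) :
    r • s ∈ supportedFeasibleSet hT A B R (r • x0) :=
  ⟨smul_mem_feasibleSet r hs.1, fun d hd => by simp [hs.2 d hd]⟩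

/-- The constrained direction subspace (`K_i` for the pattern `R i`). -/
def constrainedDirections (hT : 1 ≤ T) (A : Matrix n n 𝕜) (B : Matrix n m 𝕜)
    (R : Set ((Fin T × n) ⊕ (Fin T × m))) : Submodule 𝕜 (Trajectory 𝕜 n m T) where
  carrier := supportedFeasibleSet hT A B R 0
  zero_mem' := ⟨zero_mem_feasibleSet, by simp⟩
  add_mem' hs hs' := by simpa using add_mem_supportedFeasibleSet hs hs'
  smul_mem' r _ hs := by simpa using smul_mem_supportedFeasibleSet r hs

theorem mem_constrainedDirections :
    s ∈ constrainedDirections hT A B R ↔ s ∈ supportedFeasibleSet hT A B R 0 :=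
  Iff.rfl

end Linearity

theorem supportedFeasibleSet_eq_vadd_constrainedDirections [CommRing 𝕜] {hT : 1 ≤ T}
    {A : Matrix n n 𝕜} {B : Matrix n m 𝕜} {R : Set ((Fin T × n) ⊕ (Fin T × m))} {x0 : n → 𝕜}
    {c : Trajectory 𝕜 n m T} (hc : c ∈ supportedFeasibleSet hT A B R x0) :
    supportedFeasibleSet hT A B R x0 =
      c +ᵥ (constrainedDirections hT A B R : Set (Trajectory 𝕜 n m T)) := by
  ext s
  rw [Set.mem_vadd_set_iff_neg_vadd_mem, vadd_eq_add, SetLike.mem_coe, mem_constrainedDirections]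
  constructor
  · intro hs
    have neg_c_mem := smul_mem_supportedFeasibleSet (-1) hc
    simpa using add_mem_supportedFeasibleSet neg_c_mem hs
  · intro hs
    simpa using add_mem_supportedFeasibleSet hc hs

theorem constrainedFeasibleSet_eq_vadd_iSup [Field 𝕜] [DecidableEq n] {hT : 1 ≤ T}
    {A : Matrix n n 𝕜} {B : Matrix n m 𝕜} {R : n → Set ((Fin T × n) ⊕ (Fin T × m))}
    {c : n → Trajectory 𝕜 n m T}
    (hc : ∀ i, c i ∈ supportedFeasibleSet hT A B (R i) (Pi.single i 1)) (x0 : n → 𝕜) :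
    constrainedFeasibleSet hT A B R x0 =
      (∑ i, x0 i • c i) +ᵥ ((⨆ i, ⨆ _ : x0 i ≠ 0, constrainedDirections hT A B (R i) :
        Submodule 𝕜 (Trajectory 𝕜 n m T)) : Set (Trajectory 𝕜 n m T)) := by
  rw [← setOf_sum_smul_mem_vadd_eq]
  simp only [constrainedFeasibleSet, supportedFeasibleSet_eq_vadd_constrainedDirections (hc _)]

end Trajectories

theorem constrained_feasible_set_dimension_general {𝕜 n m : Type*} [Field 𝕜] [Fintype n]
    [DecidableEq n] [Fintype m] {T : ℕ} (hT : 1 ≤ T) (A : Matrix n n 𝕜) (B : Matrix n m 𝕜)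
    (R : n → Set ((Fin T × n) ⊕ (Fin T × m)))
    (hne : ∀ i, (supportedFeasibleSet hT A B (R i) (Pi.single i 1)).Nonempty) :
    (∀ x0 : n → 𝕜, ∃ s₀ : Trajectory 𝕜 n m T, constrainedFeasibleSet hT A B R x0 =
      s₀ +ᵥ ((⨆ i, ⨆ _ : x0 i ≠ 0, constrainedDirections hT A B (R i) :
        Submodule 𝕜 (Trajectory 𝕜 n m T)) : Set (Trajectory 𝕜 n m T))) ∧
    (∀ x0 : n → 𝕜, (∀ i, x0 i ≠ 0) →
      (affineSpan 𝕜 (constrainedFeasibleSet hT A B R x0)).direction =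
        ⨆ i, constrainedDirections hT A B (R i)) := by
  choose c hc using hne
  refine ⟨fun x0 => ⟨_, constrainedFeasibleSet_eq_vadd_iSup hc x0⟩, fun x0 hx0 => ?_⟩
  rw [constrainedFeasibleSet_eq_vadd_iSup hc, direction_affineSpan_vadd_submodule]
  simp only [hx0, ne_eq, not_false_eq_true, iSup_pos]

/-- Lemma 3: if each per-column feasible set `C_i` is nonempty, then the
constrained feasible set `T(x0) = { ∑_i x0[i] s_i : s_i ∈ C_i }` is an affine translate
of the subspace spanned by the union of the `K_i` with `x0[i] ≠ 0`; in particular, if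
all coordinates of `x0` are nonzero, its dimension (the direction of its affine span)
is `dim (K_1 + … + K_{Nx})`, independent of `x0`. -/
theorem constrained_feasible_set_dimension {Nx Nu T : ℕ} (hT : 1 ≤ T)
    (A : Matrix (Fin Nx) (Fin Nx) ℝ) (B : Matrix (Fin Nx) (Fin Nu) ℝ)
    (S : (Fin Nx → ℝ) → Set ((Fin T → Fin Nx → ℝ) × (Fin T → Fin Nu → ℝ)))
    (hS : ∀ x0 : Fin Nx → ℝ, S x0 = { su |
        su.1 ⟨0, by omega⟩ = x0 ∧
        (∀ t : ℕ, (ht : t + 1 < T) →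
          su.1 ⟨t + 1, ht⟩ =
            A.mulVec (su.1 ⟨t, by omega⟩) + B.mulVec (su.2 ⟨t, by omega⟩)) ∧
        A.mulVec (su.1 ⟨T - 1, by omega⟩) + B.mulVec (su.2 ⟨T - 1, by omega⟩) = 0 })
    (R : Fin Nx → Set ((Fin T × Fin Nx) ⊕ (Fin T × Fin Nu)))
    (coord : ((Fin T → Fin Nx → ℝ) × (Fin T → Fin Nu → ℝ)) →
      ((Fin T × Fin Nx) ⊕ (Fin T × Fin Nu)) → ℝ)
    (hcoord : ∀ su c, coord su c =
      Sum.elim (fun p : Fin T × Fin Nx => su.1 p.1 p.2)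
        (fun p : Fin T × Fin Nu => su.2 p.1 p.2) c)
    (C : Fin Nx → Set ((Fin T → Fin Nx → ℝ) × (Fin T → Fin Nu → ℝ)))
    (hC : ∀ i, C i = { s ∈ S (Pi.single i 1) | ∀ c ∈ R i, coord s c = 0 })
    (K : Fin Nx → Set ((Fin T → Fin Nx → ℝ) × (Fin T → Fin Nu → ℝ)))
    (hK : ∀ i, K i = { k ∈ S 0 | ∀ c ∈ R i, coord k c = 0 })
    (Tset : (Fin Nx → ℝ) → Set ((Fin T → Fin Nx → ℝ) × (Fin T → Fin Nu → ℝ)))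
    (hTset : ∀ x0 : Fin Nx → ℝ, Tset x0 = { s |
        ∃ f : Fin Nx → (Fin T → Fin Nx → ℝ) × (Fin T → Fin Nu → ℝ),
          (∀ i, f i ∈ C i) ∧ s = ∑ i : Fin Nx, x0 i • f i })
    (hCne : ∀ i, (C i).Nonempty) :
    (∀ x0 : Fin Nx → ℝ, ∃ s₀,
        Tset x0 = (s₀ + ·) ''
          (Submodule.span ℝ (⋃ i ∈ { i : Fin Nx | x0 i ≠ 0 }, K i) :
            Set ((Fin T → Fin Nx → ℝ) × (Fin T → Fin Nu → ℝ)))) ∧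
    (∀ x0 : Fin Nx → ℝ, (∀ i, x0 i ≠ 0) →
        (affineSpan ℝ (Tset x0)).direction =
          Submodule.span ℝ (⋃ i : Fin Nx, K i)) := by
  obtain rfl : S = feasibleSet hT A B := funext hS
  obtain rfl : coord = fun s => trajectoryCoord s := funext₂ hcoord
  obtain rfl : C = fun i => supportedFeasibleSet hT A B (R i) (Pi.single i 1) := funext hC
  obtain rfl : K = fun i => ↑(constrainedDirections hT A B (R i)) := funext hK
  obtain rfl : Tset = constrainedFeasibleSet hT A B R := funext hTset
  simpa only [Submodule.span_iUnion, Submodule.span_eq] using!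
    constrained_feasible_set_dimension_general hT A B R hCne
end
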